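/- There exists c ∈ ℤ, depending only on l and n (and not on M), such that for every M ∈ ℕ and all (M+c)-dominant multi-charges s_l, t_l ∈ ℤ^l(s) with L_{s_l} = L_{t_l} (i.e. the entries of s_l and t_l are componentwise congruent modulo n), one has s_l ⇝_M t_l. -/

import Mathlib

/-!
Write `b - a = n • d` with `∑ d = 0`. The zero-sum integer vectors are spanned by the simple roots
`e_t - e_{t+1}`, so `x` and `x + n • d` are joined by a word of `L = L(d)` moves, the same for all
`x`. Each move lowers a gap `x_k - x_{k+1}` by at most `2n`, so this path stays in `C_M` as soon as
`x` is `(M + 2nL)`-dominant. As `L(d)` is unbounded, this alone does not give a uniform `c`.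

Take `u = twoRho l = (l-1, l-3, …, 1-l)` and `c = 2n L(u)`. Every `(M+c)`-dominant `x` can be moved
inside `C_M` to `x + n • u`, whose gaps are even larger, and hence to `x + N • n • u` for all `N`.
For `N = L(d)` the point `a + N • n • u` is dominant enough for the word of `d`, which leads inside
`C_M` to `b + N • n • u`. Moves are reversible, so the paths
`a → a + N • n • u → b + N • n • u → b` compose.
-/

/-- The move `τ̇` acting on `ℤ^l` at (0-indexed) position `k`: it adds `c` to the `k`-th
entry and subtracts `c` from the `(k+1)`-th entry.  The bijection `τ̇_i` of the paper
(`1 ≤ i ≤ l−1`) is `tauMove l n (i−1)`, and its inverse is `tauMove l (−n) (i−1)`. -/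
def tauMove (l : ℕ) (c : ℤ) (k : ℕ) (v : Fin l → ℤ) : Fin l → ℤ := fun j =>
  if j.val = k then v j + c else if j.val = k + 1 then v j - c else v j

/-- `a` is `M`-dominant: consecutive entries decrease by at least `M`. -/
def IsDominant (l : ℕ) (M : ℤ) (a : Fin l → ℤ) : Prop :=
  ∀ (k : ℕ) (h : k + 1 < l), a ⟨k, by omega⟩ - a ⟨k + 1, h⟩ ≥ M

/-- The relation `s_l ⇝_M t_l`: the entries of `s_l` and `t_l` are componentwise
congruent mod `n` (`L_{s_l} = L_{t_l}`), and there is a path from `s_l` to `t_l` inside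
`L_{s_l} ∩ C_M` (integer tuples of sum `s`, congruent to `s_l` mod `n`, `M`-dominant)
whose steps are the moves `τ̇_j^{±1}`. -/
def PathRel (n l : ℕ) (s : ℤ) (M : ℤ) (a b : Fin l → ℤ) : Prop :=
  (∀ i, a i ≡ b i [ZMOD (n : ℤ)]) ∧
  ∃ (r : ℕ) (p : ℕ → Fin l → ℤ), p 0 = a ∧ p r = b ∧
    (∀ k ≤ r, (∑ i, p k i = s) ∧ (∀ i, p k i ≡ a i [ZMOD (n : ℤ)]) ∧
      IsDominant l M (p k)) ∧
    ∀ k < r, ∃ t : ℕ, t + 1 < l ∧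
      (p (k + 1) = tauMove l (n : ℤ) t (p k) ∨ p (k + 1) = tauMove l (-(n : ℤ)) t (p k))

section SimpleRoot

variable {l t : ℕ}

/-- The simple root `e_t - e_{t+1}` of type `A_{l-1}`, as the displacement of the unit move. It is
meaningful for `t + 1 < l` only; carrying no proof of this lets `t` range over `ℕ` as in
`tauMove`. -/
def simpleRoot (l t : ℕ) : Fin l → ℤ := tauMove l 1 t 0

theorem tauMove_eq_add_zsmul_simpleRoot (c : ℤ) (x : Fin l → ℤ) :
    tauMove l c t x = x + c • simpleRoot l t := by
  funext j
  simp only [tauMove, simpleRoot, Pi.add_apply, Pi.smul_apply, Pi.zero_apply, smul_eq_mul]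
  split_ifs <;> ring

theorem simpleRoot_eq_single_sub_single (ht : t + 1 < l) :
    simpleRoot l t = Pi.single ⟨t, by omega⟩ 1 - Pi.single ⟨t + 1, ht⟩ 1 := by
  funext j
  simp only [simpleRoot, tauMove, Pi.sub_apply, Pi.single_apply, Fin.ext_iff, Pi.zero_apply]
  split_ifs <;> omega

theorem sum_simpleRoot (ht : t + 1 < l) : ∑ i, simpleRoot l t i = 0 := by
  simp [simpleRoot_eq_single_sub_single ht]

theorem sum_tauMove (ht : t + 1 < l) (c : ℤ) (x : Fin l → ℤ) :
    ∑ i, tauMove l c t x i = ∑ i, x i := by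
  simp [tauMove_eq_add_zsmul_simpleRoot, Finset.sum_add_distrib, ← Finset.mul_sum,
    sum_simpleRoot ht]

theorem tauMove_modEq {n c : ℤ} (hc : n ∣ c) (x : Fin l → ℤ) (i : Fin l) :
    tauMove l c t x i ≡ x i [ZMOD n] := by
  rw [tauMove_eq_add_zsmul_simpleRoot]
  exact Int.modEq_iff_dvd.2 (by simpa using hc.mul_right _)

theorem tauMove_neg_tauMove (c : ℤ) (x : Fin l → ℤ) : tauMove l (-c) t (tauMove l c t x) = x := by
  simp only [tauMove_eq_add_zsmul_simpleRoot, neg_smul, add_neg_cancel_right]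

/-- The root lattice of type `A_{l-1}`; the displacements of sequences of moves `τ̇_t^{±1}` are the
`n`-fold multiples of its elements. -/
def rootLattice (l : ℕ) : AddSubgroup (Fin l → ℤ) :=
  AddSubgroup.closure (simpleRoot l '' {t | t + 1 < l})

theorem simpleRoot_mem_rootLattice (ht : t + 1 < l) : simpleRoot l t ∈ rootLattice l :=
  AddSubgroup.subset_closure (Set.mem_image_of_mem _ ht)

theorem single_zero_sub_single_mem_rootLattice (i : Fin (l + 1)) :
    (Pi.single 0 1 - Pi.single i 1 : Fin (l + 1) → ℤ) ∈ rootLattice (l + 1) := by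
  induction i using Fin.induction with
  | zero => simp only [sub_self, zero_mem]
  | succ i ih =>
    have hroot : Pi.single i.castSucc 1 - Pi.single i.succ 1 ∈ rootLattice (l + 1) :=
      simpleRoot_eq_single_sub_single (Nat.succ_lt_succ i.isLt) ▸
        simpleRoot_mem_rootLattice (Nat.succ_lt_succ i.isLt)
    simpa only [sub_add_sub_cancel] using add_mem ih hroot

theorem mem_rootLattice_of_sum_eq_zero {d : Fin l → ℤ} (hd : ∑ i, d i = 0) :
    d ∈ rootLattice l := by
  rcases l with _ | l
  · simp only [Subsingleton.elim d 0, zero_mem]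
  · have hd_eq : d = ∑ i, (-d i) • (Pi.single 0 1 - Pi.single i 1 : Fin (l + 1) → ℤ) := by
      simp only [smul_sub, Finset.sum_sub_distrib, ← Finset.sum_smul, Finset.sum_neg_distrib, hd]
      funext j
      simp [Finset.sum_apply, Pi.single_apply]
    rw [hd_eq]
    exact sum_mem fun i _ => zsmul_mem (single_zero_sub_single_mem_rootLattice i) _

end SimpleRoot

section Dominant

variable {l : ℕ} {K M : ℤ} {x y : Fin l → ℤ}

theorem IsDominant.mono (hx : IsDominant l K x) (hMK : M ≤ K) : IsDominant l M x :=
  fun k hk => hMK.trans (hx k hk)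

theorem IsDominant.add (hx : IsDominant l K x) (hy : IsDominant l M y) :
    IsDominant l (K + M) (x + y) := by
  intro k hk
  have hxk := hx k hk
  have hyk := hy k hk
  simp only [Pi.add_apply]
  omega

theorem IsDominant.nsmul (hx : IsDominant l K x) (N : ℕ) : IsDominant l (N * K) (N • x) := by
  intro k hk
  simp only [Pi.smul_apply, nsmul_eq_mul, ← mul_sub]
  exact mul_le_mul_of_nonneg_left (hx k hk) N.cast_nonneg

theorem IsDominant.tauMove {c : ℤ} (hx : IsDominant l (M + 2 * |c|) x) (t : ℕ) :
    IsDominant l M (tauMove l c t x) := by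
  intro k hk
  have hxk := hx k hk
  have hc_le := le_abs_self c
  have hneg_le := neg_abs_le c
  simp only [_root_.tauMove]
  split_ifs <;> omega

/-- The vector `(l-1, l-3, …, 1-l)`, the sum of the positive roots: a zero-sum direction in which
every gap grows. -/
def twoRho (l : ℕ) : Fin l → ℤ := fun i => l - 1 - 2 * i

theorem isDominant_two_twoRho (l : ℕ) : IsDominant l 2 (twoRho l) := by
  intro k hk
  simp only [twoRho]
  omega

theorem sum_twoRho (l : ℕ) : ∑ i, twoRho l i = 0 := by
  have twoRho_rev (i : Fin l) : twoRho l i.rev = -twoRho l i := by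
    simp only [twoRho, Fin.val_rev]
    omega
  have sum_eq_neg : ∑ i, twoRho l i = -∑ i, twoRho l i := by
    rw [← Finset.sum_neg_distrib, ← Equiv.sum_comp Fin.revPerm]
    simp only [Fin.revPerm_apply, twoRho_rev]
  exact self_eq_neg.1 sum_eq_neg

theorem twoRho_mem_rootLattice (l : ℕ) : twoRho l ∈ rootLattice l :=
  mem_rootLattice_of_sum_eq_zero (sum_twoRho l)

end Dominant

section DominantPath

variable {n l : ℕ} {K M : ℤ} {x y : Fin l → ℤ}

/-- A single move `τ̇_t^{±1}` between two `M`-dominant points. -/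
structure DominantStep (n : ℕ) (M : ℤ) (x y : Fin l → ℤ) : Prop where
  isDominant_left : IsDominant l M x
  isDominant_right : IsDominant l M y
  exists_move : ∃ t : ℕ, t + 1 < l ∧ (y = tauMove l n t x ∨ y = tauMove l (-n) t x)

/-- A path of moves inside `C_M`. The trivial path is allowed at every point, even one that is not
`M`-dominant. -/
abbrev DominantPath (n : ℕ) (M : ℤ) : (Fin l → ℤ) → (Fin l → ℤ) → Prop :=
  Relation.ReflTransGen (DominantStep n M)

theorem DominantStep.mono (hMK : M ≤ K) (h : DominantStep n K x y) : DominantStep n M x y :=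
  ⟨h.isDominant_left.mono hMK, h.isDominant_right.mono hMK, h.exists_move⟩

theorem DominantStep.symm (h : DominantStep n M x y) : DominantStep n M y x := by
  obtain ⟨hx, hy, t, ht, rfl | rfl⟩ := h
  · exact ⟨hy, hx, t, ht, .inr (tauMove_neg_tauMove _ _).symm⟩
  · exact ⟨hy, hx, t, ht, .inl (by simpa using (tauMove_neg_tauMove (-(n : ℤ)) x).symm)⟩

theorem DominantStep.sum_eq (h : DominantStep n M x y) : ∑ i, y i = ∑ i, x i := by
  obtain ⟨-, -, t, ht, rfl | rfl⟩ := h <;> exact sum_tauMove ht _ x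

theorem DominantStep.modEq (h : DominantStep n M x y) (i : Fin l) : y i ≡ x i [ZMOD n] := by
  obtain ⟨-, -, t, -, rfl | rfl⟩ := h
  · exact tauMove_modEq dvd_rfl x i
  · exact tauMove_modEq (dvd_neg.2 dvd_rfl) x i

theorem DominantPath.mono (hMK : M ≤ K) (h : DominantPath n K x y) : DominantPath n M x y :=
  Relation.ReflTransGen.mono (fun _ _ => DominantStep.mono hMK) _ _ h

theorem DominantPath.symm (h : DominantPath n M x y) : DominantPath n M y x :=
  have : Std.Symm (DominantStep (l := l) n M) := ⟨fun _ _ => DominantStep.symm⟩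
  Std.Symm.symm _ _ h

theorem DominantPath.isDominant (h : DominantPath n M x y) (hx : IsDominant l M x) :
    IsDominant l M y := by
  induction h with
  | refl => exact hx
  | tail _ step _ => exact step.isDominant_right

theorem DominantPath.sum_eq (h : DominantPath n M x y) : ∑ i, y i = ∑ i, x i := by
  induction h with
  | refl => rfl
  | tail _ step ih => exact step.sum_eq.trans ih

theorem DominantPath.modEq (h : DominantPath n M x y) (i : Fin l) : y i ≡ x i [ZMOD n] := by
  induction h with
  | refl => rfl
  | tail _ step ih => exact (step.modEq i).trans ih

theorem exists_seq_of_reflTransGen {α : Type*} {r : α → α → Prop} {a b : α}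
    (h : Relation.ReflTransGen r a b) :
    ∃ (m : ℕ) (p : ℕ → α), p 0 = a ∧ p m = b ∧ ∀ k < m, r (p k) (p (k + 1)) := by
  induction h using Relation.ReflTransGen.head_induction_on with
  | refl => exact ⟨0, fun _ => b, rfl, rfl, fun k hk => absurd hk k.not_lt_zero⟩
  | @head a _ hac _ ih =>
    obtain ⟨m, p, rfl, hpm, hp⟩ := ih
    refine ⟨m + 1, fun | 0 => a | k + 1 => p k, rfl, hpm, ?_⟩
    rintro (_ | k) hk
    · exact hac
    · exact hp k (Nat.lt_of_succ_lt_succ hk)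

theorem reflTransGen_of_forall_lt {α : Type*} {r : α → α → Prop} {p : ℕ → α} {m : ℕ}
    (hp : ∀ k < m, r (p k) (p (k + 1))) {k : ℕ} (hk : k ≤ m) :
    Relation.ReflTransGen r (p 0) (p k) := by
  induction k with
  | zero => exact .refl
  | succ k ih => exact (ih (by omega)).tail (hp k hk)

theorem DominantPath.pathRel (h : DominantPath n M x y) (hx : IsDominant l M x) :
    PathRel n l (∑ i, x i) M x y := by
  refine ⟨fun i => (h.modEq i).symm, ?_⟩
  obtain ⟨m, p, rfl, hpm, hp⟩ := exists_seq_of_reflTransGen h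
  refine ⟨m, p, rfl, hpm, fun k hk => ?_, fun k hk => (hp k hk).exists_move⟩
  have hpk : DominantPath n M (p 0) (p k) := reflTransGen_of_forall_lt hp hk
  exact ⟨hpk.sum_eq, hpk.modEq, hpk.isDominant hx⟩

end DominantPath

section Translation

variable {n l L L₁ L₂ : ℕ} {M : ℤ} {d e x : Fin l → ℤ}

/-- Translation by `n • d` costs at most `L` moves: for every `M`, it is realised by a path inside
`C_M` from every point whose gaps exceed `M` by at least `2nL`, where `2n` is the most by which a
move can lower a gap. -/
def TranslatesWithin (n L : ℕ) (d : Fin l → ℤ) : Prop :=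
  ∀ (M : ℤ) (x : Fin l → ℤ), IsDominant l (M + 2 * n * L) x → DominantPath n M x (x + n • d)

theorem translatesWithin_zero : TranslatesWithin n 0 (0 : Fin l → ℤ) := fun M x _ => by
  simpa using Relation.ReflTransGen.refl

theorem TranslatesWithin.add (hd : TranslatesWithin n L₁ d) (he : TranslatesWithin n L₂ e) :
    TranslatesWithin n (L₁ + L₂) (d + e) := by
  intro M x hx
  have hM : M ≤ M + 2 * n * L₂ := le_add_of_nonneg_right (by positivity)
  have hx₁ : IsDominant l (M + 2 * n * L₂ + 2 * n * L₁) x := hx.mono (by push_cast; linarith)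
  have first : DominantPath n (M + 2 * n * L₂) x (x + n • d) := hd _ x hx₁
  have hx₂ : IsDominant l (M + 2 * n * L₂) (x + n • d) :=
    first.isDominant (hx₁.mono (le_add_of_nonneg_right (by positivity)))
  have second : DominantPath n M (x + n • d) (x + n • (d + e)) := by
    simpa only [smul_add, add_assoc] using he M _ hx₂
  exact (first.mono hM).trans second

theorem IsDominant.dominantPath_tauMove {t : ℕ} (ht : t + 1 < l) {c : ℤ} (hc : c = n ∨ c = -n)
    (hx : IsDominant l (M + 2 * n) x) : DominantPath n M x (_root_.tauMove l c t x) := by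
  have habs : |c| = n := by rcases hc with rfl | rfl <;> simp
  refine .single ⟨hx.mono (by omega), .tauMove (by rwa [habs]) t, t, ht, ?_⟩
  exact hc.imp (congrArg (_root_.tauMove l · t x)) (congrArg (_root_.tauMove l · t x))

theorem translatesWithin_simpleRoot {t : ℕ} (ht : t + 1 < l) :
    TranslatesWithin n 1 (simpleRoot l t) := fun M x hx => by
  rw [← natCast_zsmul, ← tauMove_eq_add_zsmul_simpleRoot]
  exact IsDominant.dominantPath_tauMove ht (.inl rfl) (by simpa using hx)

theorem translatesWithin_neg_simpleRoot {t : ℕ} (ht : t + 1 < l) :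
    TranslatesWithin n 1 (-simpleRoot l t) := fun M x hx => by
  rw [← natCast_zsmul, smul_neg, ← neg_smul, ← tauMove_eq_add_zsmul_simpleRoot]
  exact IsDominant.dominantPath_tauMove ht (.inr rfl) (by simpa using hx)

theorem exists_translatesWithin_of_mem_rootLattice (n : ℕ) (hd : d ∈ rootLattice l) :
    ∃ L, TranslatesWithin n L d := by
  induction hd using AddSubgroup.closure_induction'' with
  | mem _ hroot =>
    obtain ⟨t, ht, rfl⟩ := hroot
    exact ⟨1, translatesWithin_simpleRoot ht⟩
  | neg_mem _ hroot =>
    obtain ⟨t, ht, rfl⟩ := hroot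
    exact ⟨1, translatesWithin_neg_simpleRoot ht⟩
  | zero => exact ⟨0, translatesWithin_zero⟩
  | add _ _ _ _ ihd ihe =>
    obtain ⟨L₁, h₁⟩ := ihd
    obtain ⟨L₂, h₂⟩ := ihe
    exact ⟨L₁ + L₂, h₁.add h₂⟩

theorem TranslatesWithin.dominantPath_add_nsmul (hd : TranslatesWithin n L d)
    (hd₀ : IsDominant l 0 d) (hx : IsDominant l (M + 2 * n * L) x) (N : ℕ) :
    DominantPath n M x (x + N • n • d) := by
  induction N with
  | zero => simpa using Relation.ReflTransGen.refl
  | succ N ih =>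
    have hxN : IsDominant l (M + 2 * n * L) (x + N • n • d) := by
      simpa using hx.add ((hd₀.nsmul n).nsmul N)
    simpa only [succ_nsmul, add_assoc] using ih.trans (hd M _ hxN)

end Translation

theorem exists_sum_eq_zero_eq_add_nsmul_of_modEq {ι : Type*} [Fintype ι] {n : ℕ} {a b : ι → ℤ}
    (hsum : ∑ i, a i = ∑ i, b i) (hab : ∀ i, a i ≡ b i [ZMOD n]) :
    ∃ d : ι → ℤ, ∑ i, d i = 0 ∧ b = a + n • d := by
  rcases eq_or_ne n 0 with rfl | hn
  · exact ⟨0, by simp, funext fun i => by simpa using (Int.modEq_zero_iff.1 (hab i)).symm⟩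
  choose d hd using fun i => (hab i).dvd
  have hb : b = a + n • d := funext fun i => by simp [eq_add_of_sub_eq' (hd i)]
  refine ⟨d, ?_, hb⟩
  have hmul : (n : ℤ) * ∑ i, d i = 0 := by
    simpa [hb, Finset.sum_add_distrib, ← Finset.mul_sum] using hsum
  exact (mul_eq_zero.1 hmul).resolve_left (Nat.cast_ne_zero.2 hn)

theorem stmt_16_general (n l : ℕ) :
    ∃ c : ℤ, ∀ (s M : ℤ) (a b : Fin l → ℤ),
      (∑ i, a i = s) → (∑ i, b i = s) →
      (∀ i, a i ≡ b i [ZMOD (n : ℤ)]) →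
      IsDominant l (M + c) a → IsDominant l (M + c) b →
      PathRel n l s M a b := by
  obtain ⟨L, hL⟩ := exists_translatesWithin_of_mem_rootLattice n (twoRho_mem_rootLattice l)
  refine ⟨2 * n * L, fun s M a b has hbs hab ha hb => ?_⟩
  have ascent {x : Fin l → ℤ} (hx : IsDominant l (M + 2 * n * L) x) (N : ℕ) :
      DominantPath n M x (x + N • n • twoRho l) :=
    hL.dominantPath_add_nsmul ((isDominant_two_twoRho l).mono zero_le_two) hx N
  obtain ⟨d, hd, rfl⟩ := exists_sum_eq_zero_eq_add_nsmul_of_modEq (has.trans hbs.symm) hab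
  obtain ⟨N, hN⟩ := exists_translatesWithin_of_mem_rootLattice n (mem_rootLattice_of_sum_eq_zero hd)
  have haM : IsDominant l M a := ha.mono (le_add_of_nonneg_right (by positivity))
  have hfar : IsDominant l (M + 2 * n * N) (a + N • n • twoRho l) :=
    (haM.add (((isDominant_two_twoRho l).nsmul n).nsmul N)).mono (by linarith)
  have across : DominantPath n M (a + N • n • twoRho l) (a + n • d + N • n • twoRho l) := by
    simpa only [add_right_comm] using hN M _ hfar
  have path : DominantPath n M a (a + n • d) :=
    ((ascent ha N).trans across).trans (ascent hb N).symm
  exact has ▸ path.pathRel haM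

/-- There is `c ∈ ℤ` (not depending on `M`) such that for every `M ∈ ℕ` and all
`(M+c)`-dominant multi-charges `s_l, t_l ∈ ℤ^l(s)` with `L_{s_l} = L_{t_l}`,
one has `s_l ⇝_M t_l`. -/
theorem stmt_16 (n l : ℕ) (hn : 2 ≤ n) (hl : 2 ≤ l) (s : ℤ) :
    ∃ c : ℤ, ∀ M : ℕ, ∀ a b : Fin l → ℤ,
      (∑ i, a i = s) → (∑ i, b i = s) →
      (∀ i, a i ≡ b i [ZMOD (n : ℤ)]) →
      IsDominant l ((M : ℤ) + c) a → IsDominant l ((M : ℤ) + c) b →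
      PathRel n l s (M : ℤ) a b := by
  obtain ⟨c, hc⟩ := stmt_16_general n l
  exact ⟨c, fun M => hc s M⟩
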